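/- arXiv:1501.03377 — 3 statements merged into one kernel-verified Lean document; each statement's English description precedes it below -/
import Mathlib

section
/- Let (G,x,y) encode a reflexive regular map that is simple and has density exceeding 1/2 (i.e. 2q² > |G|). Then either (G,x,y) is the tetrahedral map tet, or there exists n ≥ 1 such that (G,x,y) is the Fermat map Fer(n). -/
namespace RegularMap

variable {G : Type*} [Group G]

/-- The vertex set of the map: left cosets of the cyclic subgroup generated by `y`. -/
abbrev Vertex (y : G) : Type _ := G ⧸ Subgroup.zpowers y

/-- The rotation about the vertex `v = g⟨y⟩`, namely `g * y * g⁻¹`. -/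
def rot (y : G) (v : Vertex y) : G :=
  Quotient.liftOn' v (fun g => g * y * g⁻¹) (by
    intro a b h
    obtain ⟨k, hk⟩ := QuotientGroup.leftRel_apply.mp h
    have hk' : y ^ k = a⁻¹ * b := hk
    have hb : b = a * y ^ k := by rw [hk']; group
    subst hb
    group)

/-- Two vertices are adjacent iff they are distinct and form the endpoint pair of
some edge `g⟨x*y⟩`, whose endpoints are `g⟨y⟩` and `g*x*y⟨y⟩`. -/
def Adj (x y : G) (v w : Vertex y) : Prop :=
  v ≠ w ∧ ∃ g : G,
    ({v, w} : Set (Vertex y)) = {QuotientGroup.mk g, QuotientGroup.mk (g * x * y)}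

/-- The map is simple: no edge has equal endpoints, and distinct edges (left cosets
of `⟨x*y⟩`) have distinct endpoint pairs. -/
def IsSimple (x y : G) : Prop :=
  (∀ g : G, (QuotientGroup.mk g : Vertex y) ≠ QuotientGroup.mk (g * x * y)) ∧
  ∀ g h : G,
    ({QuotientGroup.mk g, QuotientGroup.mk (g * x * y)} : Set (Vertex y)) =
      {QuotientGroup.mk h, QuotientGroup.mk (h * x * y)} →
    (QuotientGroup.mk g : G ⧸ Subgroup.zpowers (x * y)) = QuotientGroup.mk h

/-- The map is reflexive: some group automorphism inverts both `x` and `y`. -/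
def IsReflexive (x y : G) : Prop :=
  ∃ σ : G ≃* G, σ x = x⁻¹ ∧ σ y = y⁻¹

/-- An automorphism of the map (given a reflection σ): either orientation preserving,
`g⟨y⟩ ↦ a*g⟨y⟩`, or orientation reversing, `g⟨y⟩ ↦ a*σ(g)⟨y⟩`. -/
def IsMapAut (y : G) (σ : G ≃* G) (φ : Vertex y → Vertex y) : Prop :=
  (∃ a : G, ∀ g : G, φ (QuotientGroup.mk g) = QuotientGroup.mk (a * g)) ∨
  (∃ a : G, ∀ g : G, φ (QuotientGroup.mk g) = QuotientGroup.mk (a * σ g))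

/-- `v'` is a diagonal neighbour of `v`: `v' = S_w² • v` for some vertex `w` adjacent to `v`. -/
def DiagNeighbor (x y : G) (v v' : Vertex y) : Prop :=
  ∃ w : Vertex y, Adj x y v w ∧ v' = rot y w ^ 2 • v

/-- Diagonal alignment: the reflexive-transitive closure of the diagonal-neighbour relation. -/
def Aligned (x y : G) : Vertex y → Vertex y → Prop :=
  Relation.ReflTransGen (DiagNeighbor x y)

/-- The primitive period `J`: the least `j ≥ 1` such that `S_v^j` fixes every vertex
diagonally aligned with `v` (this is independent of `v`). -/
noncomputable def primPeriod (x y : G) : ℕ :=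
  sInf {j : ℕ | 1 ≤ j ∧ ∀ v v' : Vertex y, Aligned x y v v' → rot y v ^ j • v' = v'}

/-- The even period `T = lcm(J, 2)`. -/
noncomputable def evenPeriod (x y : G) : ℕ := Nat.lcm (primPeriod x y) 2

/-- Relators of the tetrahedral group ⟨X,Y ∣ X³, Y³, (XY)²⟩. -/
def tetRels : Set (FreeGroup (Fin 2)) :=
  {FreeGroup.of 0 ^ 3, FreeGroup.of 1 ^ 3, (FreeGroup.of 0 * FreeGroup.of 1) ^ 2}

/-- Relators of the Fermat group ⟨X,Y ∣ X³, Y^(2n), (XY)², [X,Y]³⟩. -/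
def fermatRels (n : ℕ) : Set (FreeGroup (Fin 2)) :=
  {FreeGroup.of 0 ^ 3, FreeGroup.of 1 ^ (2 * n), (FreeGroup.of 0 * FreeGroup.of 1) ^ 2,
    (FreeGroup.of 0 * FreeGroup.of 1 * (FreeGroup.of 0)⁻¹ * (FreeGroup.of 1)⁻¹) ^ 3}

/-- `(G,x,y)` is the tetrahedral map: the canonical homomorphism from the presented
group ⟨X,Y ∣ X³, Y³, (XY)²⟩ sending X to x and Y to y is an isomorphism. -/
def IsTet (G : Type*) [Group G] (x y : G) : Prop :=
  ∃ e : PresentedGroup tetRels ≃* G,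
    e (PresentedGroup.of 0) = x ∧ e (PresentedGroup.of 1) = y

/-- `(G,x,y)` is the Fermat map `Fer(n)`: the canonical homomorphism from the Fermat
group `G_n` sending X to x and Y to y is an isomorphism. -/
def IsFermat (n : ℕ) (G : Type*) [Group G] (x y : G) : Prop :=
  ∃ e : PresentedGroup (fermatRels n) ≃* G,
    e (PresentedGroup.of 0) = x ∧ e (PresentedGroup.of 1) = y

/-!
Let `H = ⟨y⟩` and let `e = x * y` be the involution reversing an edge. Simplicity says that
`H ∩ gHg⁻¹ = 1` for `g = e`, so that `HgH` has `|H|²` elements, more than half of `G`. Hence any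
`h ∉ HgH` satisfies `H ∩ hHh⁻¹ ≠ 1`; as `H` is cyclic, `h` and `H` normalise this intersection,
whereas `g` does not: some subgroup `N ⊇ H` contains `h` but not `g`.

Apply this to `h = gyᵏg⁻¹`. The elements `y` and `gyᵏg⁻¹` of `N` bound its index from above, and
for `k` prime the action of `y` on `G ⧸ N` bounds it from below, so `gyg⁻¹ ∈ HgH`, and `gy²g⁻¹` or
`gy³g⁻¹` lies in `HgH`. The reflection, composed with inversion, fixes `e` and `H` pointwise, and
turns `eae⁻¹ ∈ HeH` into the relation `(ae)³ = 1`. From `a = y` one gets `x³ = 1`; from `a = y²` one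
gets `y³ = 1`, the tetrahedral case; and `a = y³` gives the commutator relation of the Fermat group.
Coset enumeration over `⟨y⟩` bounds the order of each presented group by the order of `G`.
-/

open DoubleCoset Subgroup
open scoped Pointwise

section DoubleCosets

variable {H K : Subgroup G} {g h : G}

theorem eq_and_eq_of_mul_mul_eq (hd : Disjoint H (MulAut.conj g • K)) {a a' b b' : G}
    (ha : a ∈ H) (ha' : a' ∈ H) (hb : b ∈ K) (hb' : b' ∈ K) (h : a * g * b = a' * g * b') :
    a = a' ∧ b = b' := by
  have hconj : a'⁻¹ * a = MulAut.conj g • (b' * b⁻¹) := by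
    calc a'⁻¹ * a = a'⁻¹ * (a * g * b) * b⁻¹ * g⁻¹ := by group
      _ = MulAut.conj g • (b' * b⁻¹) := by rw [h, MulAut.smul_def, MulAut.conj_apply]; group
  have hone : a'⁻¹ * a = 1 := disjoint_def.mp hd (mul_mem (inv_mem ha') ha)
    (hconj ▸ smul_mem_pointwise_smul _ _ _ (mul_mem hb' (inv_mem hb)))
  obtain rfl := inv_mul_eq_one.mp hone
  exact ⟨rfl, mul_left_cancel h⟩

theorem ncard_doubleCoset (hd : Disjoint H (MulAut.conj g • K)) :
    (doubleCoset g H K).ncard = Nat.card H * Nat.card K := by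
  rw [doubleCoset_eq_image2, ← Set.image_uncurry_prod, Set.InjOn.ncard_image, Set.ncard_prod]
  · rfl
  · rintro ⟨a, b⟩ ⟨ha, hb⟩ ⟨a', b'⟩ ⟨ha', hb'⟩ heq
    exact Prod.ext_iff.mpr (eq_and_eq_of_mul_mul_eq hd ha ha' hb hb' heq)

theorem inter_nonempty_of_card_lt_ncard_add_ncard {α : Type*} [Finite α] {s t : Set α}
    (h : Nat.card α < s.ncard + t.ncard) : (s ∩ t).Nonempty := by
  by_contra hst
  rw [Set.not_nonempty_iff_eq_empty, ← Set.disjoint_iff_inter_eq_empty] at hst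
  rw [← Set.ncard_union_eq hst] at h
  exact h.not_ge (Set.ncard_le_card _)

theorem not_disjoint_conj_of_notMem_doubleCoset [Finite G] (hden : Nat.card G < 2 * Nat.card H ^ 2)
    (hd : Disjoint H (MulAut.conj g • H)) (hh : h ∉ doubleCoset g H H) :
    ¬Disjoint H (MulAut.conj h • H) := by
  intro hdh
  refine hh (mem_doubleCoset_of_not_disjoint
    (Set.not_disjoint_iff_nonempty_inter.mpr (inter_nonempty_of_card_lt_ncard_add_ncard ?_)))
  rw [ncard_doubleCoset hd, ncard_doubleCoset hdh]
  linarith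

theorem exists_conj_mem_doubleCoset [Finite G] (hden : Nat.card G < 2 * Nat.card H ^ 2)
    (hd : Disjoint H (MulAut.conj g • H)) :
    ∃ a ∈ H, g * a * g⁻¹ ∈ doubleCoset g H H := by
  have hd' : Disjoint H (MulAut.conj g⁻¹ • H) := by
    rw [disjoint_iff, ← smul_left_cancel_iff (MulAut.conj g), smul_inf, smul_bot, map_inv,
      smul_inv_smul, inf_comm, hd.eq_bot]
  obtain ⟨z, hz, w, hw, rfl⟩ : (doubleCoset g H H ∩ g • doubleCoset g⁻¹ H H).Nonempty := by
    refine inter_nonempty_of_card_lt_ncard_add_ncard ?_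
    rw [Set.ncard_smul_set, ncard_doubleCoset hd, ncard_doubleCoset hd']
    linarith
  obtain ⟨a, ha, b, hb, rfl⟩ := mem_doubleCoset.mp hw
  obtain ⟨c, hc, d, hd, hcd⟩ := mem_doubleCoset.mp hz
  refine ⟨a, ha, mem_doubleCoset.mpr ⟨c, hc, d * b⁻¹, mul_mem hd (inv_mem hb), ?_⟩⟩
  rw [← mul_assoc, ← hcd]
  simp [mul_assoc]

theorem card_add_card_sq_le [Finite G] (hd : Disjoint H (MulAut.conj g • H)) (hg : g ∉ H) :
    Nat.card H + Nat.card H ^ 2 ≤ Nat.card G := by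
  have hdisj : Disjoint (H : Set G) (doubleCoset g H H) := by
    refine Set.disjoint_left.mpr fun z hz hzg => hg ?_
    obtain ⟨a, ha, b, hb, rfl⟩ := mem_doubleCoset.mp hzg
    rwa [SetLike.mem_coe, mul_mem_cancel_right hb, mul_mem_cancel_left ha] at hz
  calc Nat.card H + Nat.card H ^ 2 = (H : Set G).ncard + (doubleCoset g H H).ncard := by
        rw [ncard_doubleCoset hd, sq]; rfl
    _ = ((H : Set G) ∪ doubleCoset g H H).ncard := (Set.ncard_union_eq hdisj).symm
    _ ≤ Nat.card G := Set.ncard_le_card _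

end DoubleCosets

section CyclicSubgroups

variable {H : Subgroup G} {g h : G}

theorem eq_of_card_eq_of_le_isCyclic [Finite H] [IsCyclic H] {K L : Subgroup G}
    (hK : K ≤ H) (hL : L ≤ H) (hcard : Nat.card K = Nat.card L) : K = L := by
  let _ : CommGroup H := IsCyclic.commGroup
  have eq_ker : ∀ M ≤ H, M.subgroupOf H = (powMonoidHom (Nat.card M) : H →* H).ker := by
    intro M hM
    have hcardM : Nat.card (M.subgroupOf H) = Nat.card M :=
      Nat.card_congr (subgroupOfEquivOfLe hM).toEquiv
    refine eq_of_le_of_card_ge (fun z hz => ?_) ?_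
    · rw [MonoidHom.mem_ker, powMonoidHom_apply, ← hcardM]
      exact congrArg Subtype.val (pow_card_eq_one' (x := (⟨z, hz⟩ : M.subgroupOf H)))
    · rw [IsCyclic.card_powMonoidHom_ker, hcardM, Nat.gcd_eq_right (card_dvd_of_le hM)]
  rw [← map_subgroupOf_eq_of_le hK, ← map_subgroupOf_eq_of_le hL, eq_ker K hK, eq_ker L hL, hcard]

theorem mem_normalizer_inf_conj [Finite H] [IsCyclic H] :
    g ∈ normalizer (H ⊓ MulAut.conj g • H : Subgroup G) := by
  rw [← inv_mem_iff, mem_normalizer_iff_map_conj_eq]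
  change MulAut.conj g⁻¹ • (H ⊓ MulAut.conj g • H) = _
  refine eq_of_card_eq_of_le_isCyclic (H := H) ?_ inf_le_left
    (Nat.card_congr (equivSMul _ _).symm.toEquiv)
  rw [smul_inf, map_inv, inv_smul_smul]
  exact inf_le_right

theorem le_normalizer_of_le_isMulCommutative [IsMulCommutative H] {K : Subgroup G} (hK : K ≤ H) :
    H ≤ normalizer (K : Set G) := by
  refine le_normalizer_iff.mpr fun a ha b hb => ?_
  have hab : a * b = b * a := setLike_mul_comm ha (hK hb)
  rwa [hab, mul_inv_cancel_right]

theorem exists_subgroup_notMem_of_not_disjoint [Finite H] [IsCyclic H]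
    (hd : Disjoint H (MulAut.conj g • H)) (hh : ¬Disjoint H (MulAut.conj h • H)) :
    ∃ N : Subgroup G, H ≤ N ∧ h ∈ N ∧ g ∉ N := by
  refine ⟨normalizer (H ⊓ MulAut.conj h • H : Subgroup G),
    le_normalizer_of_le_isMulCommutative inf_le_left, mem_normalizer_inf_conj, fun hg => hh ?_⟩
  have hmap : MulAut.conj g • (H ⊓ MulAut.conj h • H) = H ⊓ MulAut.conj h • H :=
    mem_normalizer_iff_map_conj_eq.mp hg
  refine disjoint_iff_inf_le.mpr (hd inf_le_left ?_)
  rw [← hmap]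
  exact pointwise_smul_le_pointwise_smul_iff.mpr inf_le_left

theorem exists_subgroup_of_notMem_doubleCoset [Finite G] [IsCyclic H]
    (hden : Nat.card G < 2 * Nat.card H ^ 2) (hd : Disjoint H (MulAut.conj g • H))
    (hh : h ∉ doubleCoset g H H) : ∃ N : Subgroup G, H ≤ N ∧ h ∈ N ∧ g ∉ N :=
  exists_subgroup_notMem_of_not_disjoint hd (not_disjoint_conj_of_notMem_doubleCoset hden hd hh)

end CyclicSubgroups


section Reflections

variable {H : Subgroup G} {e a b c : G} {τ : G →* G}

theorem eq_of_conj_eq_mul_mul (he : e * e = 1) (hd : Disjoint H (MulAut.conj e • H))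
    (hτe : τ e = e) (hτ : ∀ z ∈ H, τ z = z⁻¹) (ha : a ∈ H) (hb : b ∈ H) (hc : c ∈ H)
    (h : e * a * e = b * e * c) : b = c := by
  have hei : e⁻¹ = e := inv_eq_of_mul_eq_one_left he
  -- Apply the anti-automorphism `z ↦ (τ z)⁻¹`, which fixes `e` and every element of `H`.
  have hreversed : e * a * e = c * e * b := by
    simpa only [map_mul, hτe, hτ a ha, hτ b hb, hτ c hc, mul_inv_rev, inv_inv, hei, mul_assoc]
      using congrArg (fun z => (τ z)⁻¹) h
  exact (eq_and_eq_of_mul_mul_eq hd hb hc hc hb (h.symm.trans hreversed)).1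

theorem mul_pow_three_of_conj_mem_doubleCoset (he : e * e = 1)
    (hd : Disjoint H (MulAut.conj e • H)) (hτe : τ e = e) (hτ : ∀ z ∈ H, τ z = z⁻¹) (ha : a ∈ H)
    (h : e * a * e⁻¹ ∈ doubleCoset e H H) : (a * e) ^ 3 = 1 := by
  obtain ⟨b, hb, c, hc, hbc⟩ := mem_doubleCoset.mp h
  rw [inv_eq_of_mul_eq_one_left he] at hbc
  obtain rfl := eq_of_conj_eq_mul_mul he hd hτe hτ ha hb hc hbc
  have hconj : e * b * e = a * e * b⁻¹ := by
    calc e * b * e = e * (b * e * b) * b⁻¹ := by group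
      _ = e * e * a * e * b⁻¹ := by rw [← hbc]; group
      _ = a * e * b⁻¹ := by rw [he, one_mul]
  obtain rfl := eq_of_conj_eq_mul_mul he hd hτe hτ hb ha (inv_mem hb) hconj
  calc (b⁻¹ * e) ^ 3 = b⁻¹ * (e * b⁻¹ * e) * b⁻¹ * e := by simp only [pow_succ, pow_zero]; group
    _ = e * e := by rw [hbc]; group
    _ = 1 := he

theorem conj_eq_of_mul_pow_three (he : e * e = 1) (h : (a * e) ^ 3 = 1) :
    e * a * e = a⁻¹ * e * a⁻¹ := by
  have hword : a * e * a * e * a * e = 1 := by rw [← h]; simp only [pow_succ, pow_zero]; group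
  calc e * a * e = a⁻¹ * (a * e * a * e * a * e) * e⁻¹ * a⁻¹ := by group
    _ = a⁻¹ * e * a⁻¹ := by rw [hword, mul_one, inv_eq_of_mul_eq_one_left he]

theorem conj_inv_eq_of_mul_pow_three (he : e * e = 1) (h : (a * e) ^ 3 = 1) :
    e * a⁻¹ * e = a * e * a := by
  have hei : e⁻¹ = e := inv_eq_of_mul_eq_one_left he
  simpa only [mul_inv_rev, inv_inv, hei, mul_assoc] using
    congrArg (·⁻¹) (conj_eq_of_mul_pow_three he h)

theorem pow_three_eq_one_of_mul_pow_three (he : e * e = 1)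
    (hd : Disjoint (zpowers a) (MulAut.conj e • zpowers a)) (h₁ : (a * e) ^ 3 = 1)
    (h₂ : (a ^ 2 * e) ^ 3 = 1) : a ^ 3 = 1 := by
  have hconj : a * e * a = (a ^ 2)⁻¹ * e * (a ^ 2)⁻¹ := by
    calc a * e * a = a⁻¹ * (a ^ 2 * e * a ^ 2) * a⁻¹ := by group
      _ = (a⁻¹ * e * a⁻¹) * (a⁻¹ * e * a⁻¹) := by
        rw [← conj_inv_eq_of_mul_pow_three he h₂]; group
      _ = e * a * (e * e) * a * e := by rw [← conj_eq_of_mul_pow_three he h₁]; group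
      _ = e * a ^ 2 * e := by rw [he, mul_one, sq, ← mul_assoc]
      _ = (a ^ 2)⁻¹ * e * (a ^ 2)⁻¹ := conj_eq_of_mul_pow_three he h₂
  have hmem : (a ^ 2)⁻¹ ∈ zpowers a := inv_mem (npow_mem_zpowers a 2)
  have ha : a = (a ^ 2)⁻¹ :=
    (eq_and_eq_of_mul_mul_eq hd (mem_zpowers a) hmem (mem_zpowers a) hmem hconj).1
  rw [pow_succ', ← eq_inv_iff_mul_eq_one]
  exact ha

end Reflections

section Blocks

variable {H K N : Subgroup G} {y g : G}

theorem conj_smul_zpowers_le_iff : MulAut.conj g • zpowers y ≤ N ↔ g * y * g⁻¹ ∈ N := by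
  rw [pointwise_smul_subset_iff, zpowers_le, mem_pointwise_smul_iff_inv_smul_mem, inv_inv]
  rfl

theorem not_conj_smul_le [Finite G] (hden : Nat.card G < 2 * Nat.card H ^ 2)
    (hd : Disjoint H (MulAut.conj g • H)) (hN : H ≤ N) (hg : g ∉ N) : ¬MulAut.conj g • H ≤ N := by
  intro hconj
  obtain ⟨a, ha, hmem⟩ := exists_conj_mem_doubleCoset hden hd
  obtain ⟨b, hb, c, hc, hbc⟩ := mem_doubleCoset.mp hmem
  have : b * g * c ∈ N := hbc ▸ hconj (smul_mem_pointwise_smul a (MulAut.conj g) H ha)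
  rw [mul_mem_cancel_right (hN hc), mul_mem_cancel_left (hN hb)] at this
  exact hg this

theorem card_mul_card_le_of_disjoint [Finite N] (hd : Disjoint H K) (hH : H ≤ N) (hK : K ≤ N) :
    Nat.card H * Nat.card K ≤ Nat.card N := by
  rw [← Nat.card_prod]
  exact Nat.card_le_card_of_injective (fun p : H × K => ⟨p.1 * p.2, mul_mem (hH p.1.2) (hK p.2.2)⟩)
    fun _ _ h => mul_injective_of_disjoint hd (congrArg Subtype.val h)

theorem orderOf_sq_le_mul_card [Finite G] (hd : Disjoint (zpowers y) (MulAut.conj g • zpowers y))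
    {k : ℕ} (hk : 0 < k) (hy : y ∈ N) (hyk : g * y ^ k * g⁻¹ ∈ N) :
    orderOf y ^ 2 ≤ k * Nat.card N := by
  have horder : orderOf y ≤ k * orderOf (y ^ k) :=
    orderOf_le_of_pow_eq_one (Nat.mul_pos hk (orderOf_pos _)) (by rw [pow_mul, pow_orderOf_eq_one])
  have hdk : Disjoint (zpowers y) (MulAut.conj g • zpowers (y ^ k)) :=
    hd.mono_right (pointwise_smul_le_pointwise_smul_iff.mpr
      (zpowers_le.mpr (npow_mem_zpowers y k)))
  have hcard := card_mul_card_le_of_disjoint hdk (zpowers_le.mpr hy)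
    (conj_smul_zpowers_le_iff.mpr hyk)
  rw [← Nat.card_congr (equivSMul (MulAut.conj g) (zpowers (y ^ k))).toEquiv, Nat.card_zpowers,
    Nat.card_zpowers] at hcard
  calc orderOf y ^ 2 ≤ orderOf y * (k * orderOf (y ^ k)) := by rw [sq]; gcongr
    _ = k * (orderOf y * orderOf (y ^ k)) := by ring
    _ ≤ k * Nat.card N := by gcongr

theorem index_lt_two_mul [Finite G] (hden : Nat.card G < 2 * orderOf y ^ 2)
    (hd : Disjoint (zpowers y) (MulAut.conj g • zpowers y))
    {k : ℕ} (hk : 0 < k) (hy : y ∈ N) (hyk : g * y ^ k * g⁻¹ ∈ N) : N.index < 2 * k := by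
  refine lt_of_mul_lt_mul_left (a := Nat.card N) ?_ (Nat.zero_le _)
  calc Nat.card N * N.index = Nat.card G := N.card_mul_index
    _ < 2 * orderOf y ^ 2 := hden
    _ ≤ 2 * (k * Nat.card N) := by gcongr; exact orderOf_sq_le_mul_card hd hk hy hyk
    _ = Nat.card N * (2 * k) := by ring

theorem not_coprime_orderOf_of_conj_pow_mem {k : ℕ} (hyk : g * y ^ k * g⁻¹ ∈ N)
    (hy : g * y * g⁻¹ ∉ N) : ¬k.Coprime (orderOf y) := by
  intro hk
  obtain ⟨m, hm⟩ := exists_pow_eq_self_of_coprime hk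
  refine hy ?_
  rw [← hm, ← conj_pow]
  exact pow_mem hyk m

theorem prime_add_one_le_index [N.FiniteIndex] {p : ℕ} [Fact p.Prime] (hy : y ∈ N) (hg : g ∉ N)
    (hyp : g * y ^ p * g⁻¹ ∈ N) (hyg : g * y * g⁻¹ ∉ N) : p + 1 ≤ N.index := by
  have smul_eq_iff (z h : G) : z • (QuotientGroup.mk h⁻¹ : G ⧸ N) = QuotientGroup.mk h⁻¹ ↔
      h * z * h⁻¹ ∈ N := by
    rw [eq_comm, MulAction.Quotient.smul_mk, smul_eq_mul, QuotientGroup.eq, inv_inv, mul_assoc]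
  have hperiod : Function.minimalPeriod (y • ·) (QuotientGroup.mk g⁻¹ : G ⧸ N) = p := by
    refine Function.minimalPeriod_eq_prime ?_ ?_
    · rwa [Function.IsPeriodicPt, Function.IsFixedPt, smul_iterate, smul_eq_iff]
    · rwa [Function.IsFixedPt, smul_eq_iff]
  -- The `y`-orbit of `g⁻¹N` has `p` elements and misses the fixed point `N`.
  let orbit : Set (G ⧸ N) := (fun k => (y • ·)^[k] (QuotientGroup.mk g⁻¹)) '' Set.Iio p
  have horbit : orbit.ncard = p := by
    rw [Set.InjOn.ncard_image (hperiod ▸ Function.iterate_injOn_Iio_minimalPeriod),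
      Set.ncard_Iio_nat]
  have hnotMem : QuotientGroup.mk 1⁻¹ ∉ orbit := by
    rintro ⟨k, -, hk⟩
    have hfix : y ^ k • (QuotientGroup.mk 1⁻¹ : G ⧸ N) = QuotientGroup.mk 1⁻¹ := by
      rw [smul_eq_iff, one_mul, inv_one, mul_one]
      exact pow_mem hy k
    have heq : (QuotientGroup.mk g⁻¹ : G ⧸ N) = QuotientGroup.mk 1⁻¹ :=
      smul_left_cancel (y ^ k) (by simpa only [smul_iterate] using hk.trans hfix.symm)
    rw [QuotientGroup.eq, inv_inv, inv_one, mul_one] at heq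
    exact hg heq
  rw [index, ← horbit, ← Set.ncard_insert_of_notMem hnotMem]
  exact Set.ncard_le_card _

end Blocks

section Density

variable [Finite G] {y g e : G}

theorem exists_subgroup_of_conj_notMem_doubleCoset (hden : Nat.card G < 2 * orderOf y ^ 2)
    (hd : Disjoint (zpowers y) (MulAut.conj g • zpowers y)) {h : G}
    (hh : h ∉ doubleCoset g (zpowers y) (zpowers y)) :
    ∃ N : Subgroup G, y ∈ N ∧ h ∈ N ∧ g ∉ N ∧ g * y * g⁻¹ ∉ N := by
  rw [← Nat.card_zpowers] at hden
  obtain ⟨N, hN, hhN, hg⟩ := exists_subgroup_of_notMem_doubleCoset hden hd hh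
  exact ⟨N, zpowers_le.mp hN, hhN, hg,
    fun hyg => not_conj_smul_le hden hd hN hg (conj_smul_zpowers_le_iff.mpr hyg)⟩

theorem conj_mem_doubleCoset (hden : Nat.card G < 2 * orderOf y ^ 2)
    (hd : Disjoint (zpowers y) (MulAut.conj g • zpowers y)) :
    g * y * g⁻¹ ∈ doubleCoset g (zpowers y) (zpowers y) := by
  by_contra hh
  obtain ⟨N, -, hyN, -, hyN'⟩ := exists_subgroup_of_conj_notMem_doubleCoset hden hd hh
  exact hyN' hyN

theorem conj_pow_three_mem_doubleCoset (hden : Nat.card G < 2 * orderOf y ^ 2)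
    (hd : Disjoint (zpowers y) (MulAut.conj g • zpowers y))
    (h₂ : g * y ^ 2 * g⁻¹ ∉ doubleCoset g (zpowers y) (zpowers y)) :
    g * y ^ 3 * g⁻¹ ∈ doubleCoset g (zpowers y) (zpowers y) := by
  by_contra h₃
  obtain ⟨N, hyN, hyN₂, hgN, hyN₁⟩ := exists_subgroup_of_conj_notMem_doubleCoset hden hd h₂
  obtain ⟨W, hyW, hyW₃, hgW, hyW₁⟩ := exists_subgroup_of_conj_notMem_doubleCoset hden hd h₃
  have hN : N.index = 3 := by
    have := index_lt_two_mul hden hd two_pos hyN hyN₂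
    have := prime_add_one_le_index hyN hgN hyN₂ hyN₁
    omega
  have hW : W.index = 4 ∨ W.index = 5 := by
    have := index_lt_two_mul hden hd three_pos hyW hyW₃
    have := prime_add_one_le_index hyW hgW hyW₃ hyW₁
    omega
  have hlt : (N ⊓ W).index < 2 * 6 := by
    refine index_lt_two_mul hden hd (by norm_num) ⟨hyN, hyW⟩ ⟨?_, ?_⟩
    · rw [pow_mul y 2 3, ← conj_pow]
      exact pow_mem hyN₂ 3
    · rw [pow_mul y 3 2, ← conj_pow]
      exact pow_mem hyW₃ 2
  have hNW := index_dvd_of_le (inf_le_left : N ⊓ W ≤ N)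
  have hWN := index_dvd_of_le (inf_le_right : N ⊓ W ≤ W)
  -- The indices of `N` and `W` are coprime, so their product, at least 12, divides that of `N ⊓ W`.
  have hpos : (N ⊓ W).index ≠ 0 := index_ne_zero_of_finite
  rw [hN] at hNW
  rcases hW with hW | hW <;> rw [hW] at hWN <;> omega

theorem even_orderOf_and_le_card_of_notMem_doubleCoset (hden : Nat.card G < 2 * orderOf y ^ 2)
    (hd : Disjoint (zpowers y) (MulAut.conj g • zpowers y))
    (h₂ : g * y ^ 2 * g⁻¹ ∉ doubleCoset g (zpowers y) (zpowers y)) :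
    Even (orderOf y) ∧ 3 * orderOf y ^ 2 ≤ 2 * Nat.card G := by
  obtain ⟨N, hy, hy₂, hg, hy₁⟩ := exists_subgroup_of_conj_notMem_doubleCoset hden hd h₂
  constructor
  · rw [even_iff_two_dvd]
    exact (Nat.prime_two.dvd_iff_not_coprime).mpr (not_coprime_orderOf_of_conj_pow_mem hy₂ hy₁)
  · calc 3 * orderOf y ^ 2 ≤ N.index * (2 * Nat.card N) :=
        Nat.mul_le_mul (prime_add_one_le_index hy hg hy₂ hy₁)
          (orderOf_sq_le_mul_card hd two_pos hy hy₂)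
      _ = 2 * Nat.card G := by rw [← N.card_mul_index]; ring

theorem twelve_le_card_of_pow_three_eq_one (hden : Nat.card G < 2 * orderOf y ^ 2)
    (hd : Disjoint (zpowers y) (MulAut.conj g • zpowers y)) (hg : g ∉ zpowers y) (hy : y ^ 3 = 1) :
    12 ≤ Nat.card G := by
  have hcard := card_add_card_sq_le hd hg
  rw [Nat.card_zpowers] at hcard
  rcases (Nat.dvd_prime Nat.prime_three).mp (orderOf_dvd_of_pow_eq_one hy) with hq | hq <;>
    rw [hq] at hcard hden <;> omega

theorem mul_pow_three_eq_one_and_dichotomy {τ : G →* G}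
    (hden : Nat.card G < 2 * orderOf y ^ 2) (he : e * e = 1)
    (hd : Disjoint (zpowers y) (MulAut.conj e • zpowers y)) (hτe : τ e = e)
    (hτ : ∀ z ∈ zpowers y, τ z = z⁻¹) :
    (y * e) ^ 3 = 1 ∧ (y ^ 3 = 1 ∨
      Even (orderOf y) ∧ 3 * orderOf y ^ 2 ≤ 2 * Nat.card G ∧ (y ^ 3 * e) ^ 3 = 1) := by
  have mul_pow_three (k : ℕ)
      (hk : e * y ^ k * e⁻¹ ∈ doubleCoset e (zpowers y) (zpowers y)) : (y ^ k * e) ^ 3 = 1 :=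
    mul_pow_three_of_conj_mem_doubleCoset he hd hτe hτ (npow_mem_zpowers y k) hk
  have h₁ : (y * e) ^ 3 = 1 :=
    mul_pow_three_of_conj_mem_doubleCoset he hd hτe hτ (mem_zpowers y)
      (conj_mem_doubleCoset hden hd)
  refine ⟨h₁, ?_⟩
  by_cases h₂ : e * y ^ 2 * e⁻¹ ∈ doubleCoset e (zpowers y) (zpowers y)
  · exact .inl (pow_three_eq_one_of_mul_pow_three he hd h₁ (mul_pow_three 2 h₂))
  · obtain ⟨heven, hcard⟩ := even_orderOf_and_le_card_of_notMem_doubleCoset hden hd h₂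
    exact .inr ⟨heven, hcard, mul_pow_three 3 (conj_pow_three_mem_doubleCoset hden hd h₂)⟩

end Density

section CosetEnumeration

variable {S : Set G} {ι X : Type*} [Finite ι] [Nonempty ι]

theorem surjective_of_smul_mem_range [MulAction G X] [MulAction.IsPretransitive G X]
    (hS : closure S = ⊤) {f : ι → X} (hf : ∀ s ∈ S, ∀ i, s • f i ∈ Set.range f) :
    f.Surjective := by
  have hstab : closure S ≤ MulAction.stabilizer G (Set.range f) := by
    refine (closure_le _).mpr fun s hs => ?_
    refine Set.eq_of_subset_of_ncard_le ?_ (Set.ncard_smul_set s _).ge (Set.finite_range f)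
    rintro _ ⟨_, ⟨i, rfl⟩, rfl⟩
    exact hf s hs i
  intro x
  obtain ⟨i⟩ := ‹Nonempty ι›
  obtain ⟨g, rfl⟩ := MulAction.exists_smul_eq G (f i) x
  have hg : g ∈ MulAction.stabilizer G (Set.range f) := hstab (hS ▸ mem_top g)
  exact (MulAction.mem_stabilizer_iff.mp hg).subset
    (Set.smul_mem_smul_set (Set.mem_range_self i))

theorem finite_and_card_le_of_smul_mem_range {H : Subgroup G} [Finite H] (hS : closure S = ⊤)
    {f : ι → G ⧸ H} (hf : ∀ s ∈ S, ∀ i, s • f i ∈ Set.range f) :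
    Finite G ∧ Nat.card G ≤ Nat.card ι * Nat.card H := by
  have hsurj : f.Surjective := surjective_of_smul_mem_range hS hf
  have : Finite (G ⧸ H) := .of_surjective f hsurj
  refine ⟨Nat.finite_of_card_ne_zero ?_, ?_⟩ <;> rw [← H.card_mul_index]
  · exact mul_ne_zero Nat.card_pos.ne' Nat.card_pos.ne'
  · rw [mul_comm]
    exact Nat.mul_le_mul_right _ (Nat.card_le_card_of_surjective f hsurj)

end CosetEnumeration

section Orders

variable {y e : G}

theorem finite_and_card_le_twelve (hgen : closure {y, e} = ⊤) (he : e * e = 1) (hy : y ^ 3 = 1)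
    (hye : (y * e) ^ 3 = 1) : Finite G ∧ Nat.card G ≤ 12 := by
  have hsq : y * y = y⁻¹ := by rw [← mul_eq_one_iff_eq_inv, ← hy, pow_succ, sq]
  let f : Fin 4 → G ⧸ zpowers y := fun i => QuotientGroup.mk (![1, e, y * e, y⁻¹ * e] i)
  have hfy : ∀ i, y • f i ∈ Set.range f := by
    intro i
    fin_cases i
    · exact ⟨0, QuotientGroup.eq.mpr (by simp)⟩
    · exact ⟨2, rfl⟩
    · exact ⟨3, congrArg QuotientGroup.mk (by change y⁻¹ * e = y * (y * e); rw [← hsq, mul_assoc])⟩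
    · exact ⟨1, congrArg QuotientGroup.mk (mul_inv_cancel_left y e).symm⟩
  have hfe : ∀ i, e • f i ∈ Set.range f := by
    intro i
    fin_cases i
    · exact ⟨1, congrArg QuotientGroup.mk (mul_one e).symm⟩
    · exact ⟨0, congrArg QuotientGroup.mk he.symm⟩
    · refine ⟨3, ?_⟩
      change QuotientGroup.mk (y⁻¹ * e) = QuotientGroup.mk (e * (y * e))
      rw [← mul_assoc, conj_eq_of_mul_pow_three he hye,
        QuotientGroup.mk_mul_of_mem _ (inv_mem (mem_zpowers y))]
    · refine ⟨2, ?_⟩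
      change QuotientGroup.mk (y * e) = QuotientGroup.mk (e * (y⁻¹ * e))
      rw [← mul_assoc, conj_inv_eq_of_mul_pow_three he hye,
        QuotientGroup.mk_mul_of_mem _ (mem_zpowers y)]
  have hf : ∀ s ∈ ({y, e} : Set G), ∀ i, s • f i ∈ Set.range f := by
    rintro s (rfl | rfl)
    exacts [hfy, hfe]
  have : Finite (zpowers y) :=
    (isOfFinOrder_iff_pow_eq_one.mpr ⟨3, three_pos, hy⟩).finite_zpowers
  obtain ⟨hfin, hcard⟩ := finite_and_card_le_of_smul_mem_range hgen hf
  refine ⟨hfin, hcard.trans ?_⟩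
  rw [Nat.card_zpowers, Nat.card_fin]
  have := orderOf_le_of_pow_eq_one three_pos hy
  omega

theorem conj_sq_mul_sq_eq_one (he : e * e = 1) (hye : (y * e) ^ 3 = 1) :
    (e * y ^ 2 * e * y) ^ 2 = 1 := by
  have hconj : e * y ^ 2 * e * y = e * y * e * (e * y)⁻¹ := by
    calc e * y ^ 2 * e * y = e * y * (y * e * y) := by rw [sq]; group
      _ = e * y * (e * y⁻¹ * e) := by rw [conj_inv_eq_of_mul_pow_three he hye]
      _ = e * y * e * (e * y)⁻¹ := by
        rw [mul_inv_rev, inv_eq_of_mul_eq_one_left he]; group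
  rw [hconj, conj_pow, sq, he, mul_one, mul_inv_cancel]

theorem commute_sq_conj_sq (he : e * e = 1) (hye : (y * e) ^ 3 = 1) (hy₃e : (y ^ 3 * e) ^ 3 = 1) :
    Commute (y ^ 2) (e * y ^ 2 * e) := by
  have hb : y⁻¹ * (e * y ^ 2 * e)⁻¹ = e * y ^ 2 * e * y := by
    rw [← mul_inv_rev, inv_eq_iff_mul_eq_one, ← sq, conj_sq_mul_sq_eq_one he hye]
  have hei : e⁻¹ = e := inv_eq_of_mul_eq_one_left he
  have hconj : e * y ^ 2 * e = (y ^ 2)⁻¹ * (e * y ^ 2 * e) * y ^ 2 := by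
    calc e * y ^ 2 * e = e * y ^ 3 * e * (e⁻¹ * y⁻¹ * e) := by group
      _ = e * y ^ 3 * e * (e * y⁻¹ * e) := by rw [hei]
      _ = (y ^ 3)⁻¹ * e * (y ^ 3)⁻¹ * (y * e * y) := by
        rw [conj_eq_of_mul_pow_three he hy₃e, conj_inv_eq_of_mul_pow_three he hye]
      _ = (y ^ 2)⁻¹ * (y⁻¹ * (e⁻¹ * y ^ 2 * e⁻¹)⁻¹) * y := by group
      _ = (y ^ 2)⁻¹ * (e * y ^ 2 * e) * y ^ 2 := by rw [hei, hb, sq y]; group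
  calc y ^ 2 * (e * y ^ 2 * e) = y ^ 2 * ((y ^ 2)⁻¹ * (e * y ^ 2 * e) * y ^ 2) := by rw [← hconj]
    _ = e * y ^ 2 * e * y ^ 2 := by group

theorem mk_mul_eq_mk_inv_of_mem_zpowers {b z : G} (hby : (b * y) ^ 2 = 1)
    (hcomm : Commute (y ^ 2) b) (hz : z ∈ zpowers b) :
    (QuotientGroup.mk (y * z) : G ⧸ zpowers y) = QuotientGroup.mk z⁻¹ := by
  obtain ⟨k, rfl⟩ := mem_zpowers_iff.mp hz
  have hsemi : SemiconjBy y b (b⁻¹ * (y ^ 2)⁻¹) := by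
    calc y * b = b⁻¹ * (b * y) ^ 2 * y⁻¹ := by rw [sq]; group
      _ = b⁻¹ * (y ^ 2)⁻¹ * y := by rw [hby]; group
  have hmul : y * b ^ k = (b ^ k)⁻¹ * y ^ (1 - 2 * k) := by
    calc y * b ^ k = (b⁻¹ * (y ^ 2)⁻¹) ^ k * y := hsemi.zpow_right k
      _ = (b ^ k)⁻¹ * y ^ (1 - 2 * k) := by
        rw [(hcomm.symm.inv_inv).mul_zpow]; group
  rw [hmul, QuotientGroup.mk_mul_of_mem _ (zpow_mem_zpowers y _)]

/-- The left cosets of `⟨y⟩` in a Fermat group, whose vertices fall into three classes: with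
`b = e * y ^ 2 * e`, these are `b ^ j * ⟨y⟩`, `e * b ^ j * ⟨y⟩` and `y * e * b ^ j * ⟨y⟩`. -/
def fermatCoset (y e : G) (p : Fin 3 × zpowers (e * y ^ 2 * e)) : G ⧸ zpowers y :=
  QuotientGroup.mk (![1, e, y * e] p.1 * p.2)

theorem rotation_smul_fermatCoset_mem_range (he : e * e = 1) (hye : (y * e) ^ 3 = 1)
    (hcomm : Commute (y ^ 2) (e * y ^ 2 * e)) (i : Fin 3 × zpowers (e * y ^ 2 * e)) :
    y • fermatCoset y e i ∈ Set.range (fermatCoset y e) := by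
  obtain ⟨i, z, hz⟩ := i
  fin_cases i
  · refine ⟨(0, ⟨z⁻¹, inv_mem hz⟩), ?_⟩
    change QuotientGroup.mk (1 * z⁻¹) = QuotientGroup.mk (y * (1 * z))
    rw [one_mul, one_mul, mk_mul_eq_mk_inv_of_mem_zpowers (conj_sq_mul_sq_eq_one he hye) hcomm hz]
  · exact ⟨(2, ⟨z, hz⟩), congrArg QuotientGroup.mk (mul_assoc y e z)⟩
  · refine ⟨(1, ⟨e * y ^ 2 * e * z, mul_mem (mem_zpowers _) hz⟩), congrArg QuotientGroup.mk ?_⟩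
    change e * (e * y ^ 2 * e * z) = y * (y * e * z)
    simp only [← mul_assoc, he, one_mul, sq]

theorem involution_smul_fermatCoset_mem_range (he : e * e = 1) (hye : (y * e) ^ 3 = 1)
    (hcomm : Commute (y ^ 2) (e * y ^ 2 * e)) (i : Fin 3 × zpowers (e * y ^ 2 * e)) :
    e • fermatCoset y e i ∈ Set.range (fermatCoset y e) := by
  obtain ⟨i, z, hz⟩ := i
  fin_cases i
  · exact ⟨(1, ⟨z, hz⟩), congrArg (QuotientGroup.mk <| e * ·) (one_mul z).symm⟩
  · refine ⟨(0, ⟨z, hz⟩), congrArg QuotientGroup.mk ?_⟩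
    change 1 * z = e * (e * z)
    rw [← mul_assoc, he]
  · refine ⟨(2, ⟨(e * y ^ 2 * e)⁻¹ * z⁻¹, mul_mem (inv_mem (mem_zpowers _)) (inv_mem hz)⟩), ?_⟩
    have hz' : (QuotientGroup.mk (y⁻¹ * z) : G ⧸ zpowers y) = QuotientGroup.mk z⁻¹ := by
      have hinv := mk_mul_eq_mk_inv_of_mem_zpowers (conj_sq_mul_sq_eq_one he hye) hcomm
        (inv_mem hz)
      simpa [QuotientGroup.eq, mul_assoc] using hinv.symm
    have hye' : y * e * (e * y ^ 2 * e)⁻¹ = y⁻¹ * e := by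
      calc y * e * (e * y ^ 2 * e)⁻¹ = y⁻¹ * e⁻¹ := by group
        _ = y⁻¹ * e := by rw [inv_eq_of_mul_eq_one_left he]
    calc (QuotientGroup.mk (y * e * ((e * y ^ 2 * e)⁻¹ * z⁻¹)) : G ⧸ zpowers y)
        = (y⁻¹ * e) • QuotientGroup.mk z⁻¹ := by rw [← mul_assoc, hye']; rfl
      _ = (y⁻¹ * e) • QuotientGroup.mk (y⁻¹ * z) := by rw [hz']
      _ = QuotientGroup.mk (e * y * e * z) := by
        rw [conj_eq_of_mul_pow_three he hye, mul_assoc (y⁻¹ * e)]; rfl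
      _ = QuotientGroup.mk (e * (y * e * z)) := by simp only [mul_assoc]

theorem finite_and_card_le_six_mul_sq (hgen : closure {y, e} = ⊤) (he : e * e = 1)
    (hye : (y * e) ^ 3 = 1) (hy₃e : (y ^ 3 * e) ^ 3 = 1) {n : ℕ} (hn : 0 < n)
    (hy : y ^ (2 * n) = 1) : Finite G ∧ Nat.card G ≤ 6 * n ^ 2 := by
  have hcomm := commute_sq_conj_sq he hye hy₃e
  have hcoset : ∀ s ∈ ({y, e} : Set G), ∀ i,
      s • fermatCoset y e i ∈ Set.range (fermatCoset y e) := by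
    rintro s (rfl | rfl)
    exacts [rotation_smul_fermatCoset_mem_range he hye hcomm,
      involution_smul_fermatCoset_mem_range he hye hcomm]
  have hconj : (e * y ^ 2 * e) ^ n = 1 := by
    nth_rewrite 2 [← inv_eq_of_mul_eq_one_left he]
    rw [conj_pow, ← pow_mul, hy, mul_one, mul_inv_cancel]
  have : Finite (zpowers y) :=
    (isOfFinOrder_iff_pow_eq_one.mpr ⟨2 * n, by positivity, hy⟩).finite_zpowers
  have : Finite (zpowers (e * y ^ 2 * e)) :=
    (isOfFinOrder_iff_pow_eq_one.mpr ⟨n, hn, hconj⟩).finite_zpowers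
  obtain ⟨hfin, hcard⟩ := finite_and_card_le_of_smul_mem_range hgen hcoset
  refine ⟨hfin, hcard.trans ?_⟩
  rw [Nat.card_prod, Nat.card_fin, Nat.card_zpowers, Nat.card_zpowers]
  calc 3 * orderOf (e * y ^ 2 * e) * orderOf y ≤ 3 * n * (2 * n) := by
        gcongr
        · exact orderOf_le_of_pow_eq_one hn hconj
        · exact orderOf_le_of_pow_eq_one (by positivity) hy
    _ = 6 * n ^ 2 := by ring

end Orders

section Presentations

theorem exists_presentedGroup_mulEquiv {α : Type*} {rels : Set (FreeGroup α)} {f : α → G}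
    [Finite (PresentedGroup rels)] (hf : closure (Set.range f) = ⊤)
    (hrels : ∀ r ∈ rels, FreeGroup.lift f r = 1)
    (hcard : Nat.card (PresentedGroup rels) ≤ Nat.card G) :
    ∃ φ : PresentedGroup rels ≃* G, ∀ a, φ (PresentedGroup.of a) = f a := by
  let φ : PresentedGroup rels →* G := PresentedGroup.toGroup hrels
  have hφ (a : α) : φ (PresentedGroup.of a) = f a := PresentedGroup.toGroup.of hrels
  have hsurj : Function.Surjective φ := by
    rw [← MonoidHom.range_eq_top, eq_top_iff, ← hf, closure_le]
    rintro _ ⟨a, rfl⟩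
    exact ⟨_, hφ a⟩
  have hbij : Function.Bijective φ := (Nat.bijective_iff_surjective_and_card φ).mpr
    ⟨hsurj, hcard.antisymm (Nat.card_le_card_of_surjective φ hsurj)⟩
  exact ⟨MulEquiv.ofBijective φ hbij, hφ⟩

theorem closure_presentedGroup_pair (rels : Set (FreeGroup (Fin 2))) :
    closure {(PresentedGroup.of 0 : PresentedGroup rels), PresentedGroup.of 1} = ⊤ := by
  rw [← PresentedGroup.closure_range_of rels, ← Matrix.range_cons_cons_empty _ _ ![]]
  congr 2
  exact (FinVec.etaExpand_eq (PresentedGroup.of (rels := rels)))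

variable {x y : G}

theorem closure_pair_mul : closure {y, x * y} = closure {x, y} := by
  have mem_of_pair (a b : G) : a ∈ closure {a, b} ∧ b ∈ closure {a, b} :=
    ⟨subset_closure (.inl rfl), subset_closure (.inr rfl)⟩
  refine le_antisymm ((closure_le _).mpr ?_) ((closure_le _).mpr ?_)
  · obtain ⟨hx, hy⟩ := mem_of_pair x y
    rintro _ (rfl | rfl)
    exacts [hy, mul_mem hx hy]
  · obtain ⟨hy, hxy⟩ := mem_of_pair y (x * y)
    rintro _ (rfl | rfl)
    exacts [(mul_mem_cancel_right hy).mp hxy, hy]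

theorem mul_mul_eq_inv (hxy : (x * y) ^ 2 = 1) : y * (x * y) = x⁻¹ := by
  rw [← mul_eq_one_iff_eq_inv', ← mul_assoc, ← sq, hxy]

theorem commutator_eq_conj (hx : x ^ 3 = 1) (hxy : (x * y) ^ 2 = 1) :
    x * y * x⁻¹ * y⁻¹ = x * (y ^ 3 * (x * y)) * x⁻¹ := by
  have hxx : x⁻¹ * x⁻¹ = x := by
    rw [← mul_inv_rev, inv_eq_iff_mul_eq_one, ← sq, ← pow_succ, hx]
  calc x * y * x⁻¹ * y⁻¹ = x * y * (y * (x * y)) * y⁻¹ := by rw [mul_mul_eq_inv hxy]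
    _ = x * y ^ 2 * (x⁻¹ * x⁻¹) := by rw [hxx, sq]; group
    _ = x * (y ^ 2 * (y * (x * y))) * x⁻¹ := by rw [mul_mul_eq_inv hxy]; group
    _ = x * (y ^ 3 * (x * y)) * x⁻¹ := by group

theorem commutator_pow_three_eq_one_iff (hx : x ^ 3 = 1) (hxy : (x * y) ^ 2 = 1) :
    (x * y * x⁻¹ * y⁻¹) ^ 3 = 1 ↔ (y ^ 3 * (x * y)) ^ 3 = 1 := by
  rw [commutator_eq_conj hx hxy, conj_pow, conj_eq_one_iff]

theorem finite_and_card_tetRels_le :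
    Finite (PresentedGroup tetRels) ∧ Nat.card (PresentedGroup tetRels) ≤ 12 := by
  let x : PresentedGroup tetRels := PresentedGroup.of 0
  let y : PresentedGroup tetRels := PresentedGroup.of 1
  have hx : x ^ 3 = 1 := PresentedGroup.one_of_mem (.inl rfl)
  have hy : y ^ 3 = 1 := PresentedGroup.one_of_mem (.inr (.inl rfl))
  have hxy : (x * y) ^ 2 = 1 := PresentedGroup.one_of_mem (.inr (.inr rfl))
  refine finite_and_card_le_twelve (y := y) (e := x * y) ?_ (by rw [← sq, hxy]) hy ?_
  · rw [closure_pair_mul, closure_presentedGroup_pair]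
  · rw [mul_mul_eq_inv hxy, inv_pow, hx, inv_one]

theorem finite_and_card_fermatRels_le {n : ℕ} (hn : 0 < n) :
    Finite (PresentedGroup (fermatRels n)) ∧
      Nat.card (PresentedGroup (fermatRels n)) ≤ 6 * n ^ 2 := by
  let x : PresentedGroup (fermatRels n) := PresentedGroup.of 0
  let y : PresentedGroup (fermatRels n) := PresentedGroup.of 1
  have hx : x ^ 3 = 1 := PresentedGroup.one_of_mem (.inl rfl)
  have hy : y ^ (2 * n) = 1 := PresentedGroup.one_of_mem (.inr (.inl rfl))
  have hxy : (x * y) ^ 2 = 1 := PresentedGroup.one_of_mem (.inr (.inr (.inl rfl)))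
  have hcomm : (x * y * x⁻¹ * y⁻¹) ^ 3 = 1 := PresentedGroup.one_of_mem (.inr (.inr (.inr rfl)))
  refine finite_and_card_le_six_mul_sq (y := y) (e := x * y) ?_ (by rw [← sq, hxy]) ?_ ?_ hn hy
  · rw [closure_pair_mul, closure_presentedGroup_pair]
  · rw [mul_mul_eq_inv hxy, inv_pow, hx, inv_one]
  · exact (commutator_pow_three_eq_one_iff hx hxy).mp hcomm

theorem isTet_of_pow_three (hgen : closure {x, y} = ⊤) (hx : x ^ 3 = 1) (hy : y ^ 3 = 1)
    (hxy : (x * y) ^ 2 = 1) (hcard : 12 ≤ Nat.card G) : IsTet G x y := by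
  obtain ⟨hfin, hle⟩ := finite_and_card_tetRels_le
  obtain ⟨φ, hφ⟩ := exists_presentedGroup_mulEquiv (rels := tetRels) (f := ![x, y])
    (by rw [Matrix.range_cons_cons_empty, hgen]) (by rintro r (rfl | rfl | rfl) <;> simpa)
    (hle.trans hcard)
  exact ⟨φ, hφ 0, hφ 1⟩

theorem isFermat_of_relations (hgen : closure {x, y} = ⊤) {n : ℕ} (hn : 0 < n) (hx : x ^ 3 = 1)
    (hy : y ^ (2 * n) = 1) (hxy : (x * y) ^ 2 = 1) (hcomm : (x * y * x⁻¹ * y⁻¹) ^ 3 = 1)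
    (hcard : 6 * n ^ 2 ≤ Nat.card G) : IsFermat n G x y := by
  obtain ⟨hfin, hle⟩ := finite_and_card_fermatRels_le hn
  obtain ⟨φ, hφ⟩ := exists_presentedGroup_mulEquiv (rels := fermatRels n) (f := ![x, y])
    (by rw [Matrix.range_cons_cons_empty, hgen]) (by rintro r (rfl | rfl | rfl | rfl) <;> simpa)
    (hle.trans hcard)
  exact ⟨φ, hφ 0, hφ 1⟩

end Presentations

section Maps

variable {x y : G}

theorem IsSimple.mul_notMem_zpowers (h : IsSimple x y) : x * y ∉ zpowers y := by
  intro hmem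
  refine h.1 1 (QuotientGroup.eq.mpr ?_)
  rwa [inv_one, one_mul, one_mul]

theorem IsSimple.disjoint_zpowers_conj (h : IsSimple x y) (hxy : (x * y) ^ 2 = 1) :
    Disjoint (zpowers y) (MulAut.conj (x * y) • zpowers y) := by
  refine disjoint_def.mpr fun {a} ha hconj => ?_
  rw [mem_pointwise_smul_iff_inv_smul_mem, ← map_inv, MulAut.smul_def, MulAut.conj_apply,
    inv_inv] at hconj
  -- Such an `a` fixes both endpoints of the edge `⟨x * y⟩`, hence the edge itself.
  have hstart : (QuotientGroup.mk 1 : Vertex y) = QuotientGroup.mk a :=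
    QuotientGroup.eq.mpr (by rwa [inv_one, one_mul])
  have hend : (QuotientGroup.mk (1 * x * y) : Vertex y) = QuotientGroup.mk (a * x * y) :=
    QuotientGroup.eq.mpr (by rwa [one_mul, mul_assoc a, ← mul_assoc])
  have hedge : a ∈ zpowers (x * y) := by
    simpa only [QuotientGroup.eq, inv_one, one_mul] using h.2 1 a (by rw [hstart, hend])
  obtain ⟨k, rfl⟩ := mem_zpowers_iff.mp hedge
  obtain ⟨m, rfl | rfl⟩ := Int.even_or_odd' k
  · rw [zpow_mul, zpow_ofNat, hxy, one_zpow]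
  · rw [zpow_add, zpow_mul, zpow_ofNat, hxy, one_zpow, one_mul, zpow_one] at ha
    exact absurd ha h.mul_notMem_zpowers

theorem IsReflexive.exists_edgeReflection (h : IsReflexive x y) (hxy : (x * y) ^ 2 = 1) :
    ∃ τ : G →* G, τ (x * y) = x * y ∧ ∀ z ∈ zpowers y, τ z = z⁻¹ := by
  obtain ⟨σ, hσx, hσy⟩ := h
  refine ⟨(MulAut.conj y⁻¹).toMonoidHom.comp σ.toMonoidHom, ?_, fun z hz => ?_⟩
  · calc y⁻¹ * σ (x * y) * y⁻¹⁻¹ = (x * y)⁻¹ := by rw [map_mul, hσx, hσy]; group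
      _ = x * y := by rw [inv_eq_iff_mul_eq_one, ← sq, hxy]
  · obtain ⟨k, rfl⟩ := mem_zpowers_iff.mp hz
    calc y⁻¹ * σ (y ^ k) * y⁻¹⁻¹ = (y ^ k)⁻¹ := by rw [map_zpow, hσy]; group

end Maps

/-- **Regular map density theorem.** A reflexive regular map that is simple and has
density exceeding 1/2 (i.e. 2q² > |G|) is the tetrahedral map or a Fermat map. -/
theorem regular_map_density_theorem
    (G : Type*) [Group G] [Finite G] (x y : G)
    (hgen : Subgroup.closure {x, y} = ⊤) (hxy : (x * y) ^ 2 = 1)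
    (hrefl : IsReflexive x y) (hsimple : IsSimple x y)
    (hden : 2 * orderOf y ^ 2 > Nat.card G) :
    IsTet G x y ∨ ∃ n : ℕ, 1 ≤ n ∧ IsFermat n G x y := by
  have hd := hsimple.disjoint_zpowers_conj hxy
  obtain ⟨τ, hτe, hτ⟩ := hrefl.exists_edgeReflection hxy
  obtain ⟨hface, hcases⟩ :=
    mul_pow_three_eq_one_and_dichotomy hden (by rw [← sq, hxy]) hd hτe hτ
  have hx : x ^ 3 = 1 := by rwa [mul_mul_eq_inv hxy, inv_pow, inv_eq_one] at hface
  rcases hcases with hy | ⟨heven, hcard, hcomm⟩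
  · exact .inl (isTet_of_pow_three hgen hx hy hxy
      (twelve_le_card_of_pow_three_eq_one hden hd hsimple.mul_notMem_zpowers hy))
  · obtain ⟨n, hn⟩ := even_iff_exists_two_mul.mp heven
    have hpos : 0 < n := by have := orderOf_pos y; omega
    rw [hn] at hcard
    exact .inr ⟨n, hpos, isFermat_of_relations hgen hpos hx (hn ▸ pow_orderOf_eq_one y) hxy
      ((commutator_pow_three_eq_one_iff hx hxy).mpr hcomm) (by linarith)⟩

end RegularMap
end

section
/- Let (G,x,y) encode a regular map, let v and v' be vertices, and let j be an integer such that S_v^j·v' = v'. Then there exists an integer k with S_v^j = S_{v'}^{k·j} in G; moreover k is uniquely determined modulo q/gcd(j,q) and is invertible modulo q/gcd(j,q). -/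
namespace RegularMap

variable {G : Type*} [Group G]

/-!
The stabilizer of the vertex `v'` is the cyclic group generated by `S_{v'}`, so `S_v^j` is a power
of `S_{v'}`. As `S_v` and `S_{v'}` are conjugate to `y`, the elements `S_v^j` and `S_{v'}^j` have
the same order `q / gcd(j, q)`. A finite cyclic group has at most one subgroup of each order, so
these two elements generate the same subgroup, and each is a power of the other with an exponent
that is a unit modulo their order.
-/

section CyclicSubgroups

open Subgroup

variable {a b c : G}

theorem orderOf_zpow_of_isOfFinOrder (ha : IsOfFinOrder a) (j : ℤ) :
    orderOf (a ^ j) = orderOf a / Int.gcd j (orderOf a) := by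
  have orderOf_zpow_eq_natAbs : orderOf (a ^ j) = orderOf (a ^ j.natAbs) := by
    rcases Int.natAbs_eq j with hj | hj
    · rw [← zpow_natCast, ← hj]
    · rw [← zpow_natCast, ← orderOf_inv, ← zpow_neg, ← neg_eq_iff_eq_neg.mpr hj]
  rw [orderOf_zpow_eq_natAbs, ha.orderOf_pow, Nat.gcd_comm, Int.gcd, Int.natAbs_natCast]

theorem zpow_mem_zpowers_zpow_iff {m j : ℤ} :
    a ^ m ∈ zpowers (a ^ j) ↔ (Int.gcd j (orderOf a) : ℤ) ∣ m := by
  rw [Int.coe_gcd, gcd_dvd_iff_exists]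
  simp only [mem_zpowers_iff, ← zpow_mul, zpow_eq_zpow_iff_modEq, Int.modEq_iff_dvd, dvd_def,
    sub_eq_iff_eq_add']

theorem mem_zpowers_of_orderOf_dvd (ha : IsOfFinOrder a) (hb : b ∈ zpowers a)
    (hc : c ∈ zpowers a) (h : orderOf b ∣ orderOf c) : b ∈ zpowers c := by
  obtain ⟨m, rfl⟩ := mem_zpowers_iff.mp hb
  obtain ⟨j, rfl⟩ := mem_zpowers_iff.mp hc
  rw [orderOf_zpow_of_isOfFinOrder ha, orderOf_zpow_of_isOfFinOrder ha] at h
  have gcd_dvd_orderOf (i : ℤ) : Int.gcd i (orderOf a) ∣ orderOf a :=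
    Int.natCast_dvd_natCast.mp (Int.gcd_dvd_right ..)
  have gcd_dvd_gcd : Int.gcd j (orderOf a) ∣ Int.gcd m (orderOf a) := by
    simpa only [Nat.div_div_self (gcd_dvd_orderOf _) ha.orderOf_pos.ne'] using
      Nat.div_dvd_div_left (Nat.div_dvd_of_dvd (gcd_dvd_orderOf j)) h
  exact zpow_mem_zpowers_zpow_iff.mpr
    ((Int.natCast_dvd_natCast.mpr gcd_dvd_gcd).trans (Int.gcd_dvd_left ..))

theorem zpowers_eq_of_orderOf_eq (ha : IsOfFinOrder a) (hb : b ∈ zpowers a)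
    (hc : c ∈ zpowers a) (h : orderOf b = orderOf c) : zpowers b = zpowers c :=
  le_antisymm (zpowers_le.mpr (mem_zpowers_of_orderOf_dvd ha hb hc h.dvd))
    (zpowers_le.mpr (mem_zpowers_of_orderOf_dvd ha hc hb h.symm.dvd))

theorem mem_zpowers_zpow_iff_isUnit {k : ℤ} :
    a ∈ zpowers (a ^ k) ↔ IsUnit (k : ZMod (orderOf a)) := by
  rw [mem_zpowers_zpow_iff, ZMod.coe_int_isUnit_iff_isCoprime, isCoprime_comm,
    Int.isCoprime_iff_gcd_eq_one]

theorem exists_isUnit_zpow_eq_of_zpowers_eq (h : zpowers a = zpowers b) :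
    ∃ k : ℤ, a = b ^ k ∧ IsUnit (k : ZMod (orderOf b)) ∧
      ∀ k' : ℤ, a = b ^ k' → (k' : ZMod (orderOf b)) = k := by
  obtain ⟨k, rfl⟩ := mem_zpowers_iff.mp (h ▸ mem_zpowers a)
  refine ⟨k, rfl, mem_zpowers_zpow_iff_isUnit.mp (h ▸ mem_zpowers b), fun k' hk' => ?_⟩
  rw [ZMod.intCast_eq_intCast_iff, ← zpow_eq_zpow_iff_modEq, hk']

end CyclicSubgroups

section Rotation

variable {y : G}

theorem rot_mk (g : G) : rot y (QuotientGroup.mk g) = g * y * g⁻¹ := rfl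

theorem orderOf_rot (v : Vertex y) : orderOf (rot y v) = orderOf y := by
  induction v using QuotientGroup.induction_on with | _ g =>
  rw [rot_mk, ← MulAut.conj_apply, MulEquiv.orderOf_eq]

theorem stabilizer_eq_zpowers_rot (v : Vertex y) :
    MulAction.stabilizer G v = Subgroup.zpowers (rot y v) := by
  induction v using QuotientGroup.induction_on with | _ g =>
  have mk_eq_smul : (QuotientGroup.mk g : Vertex y) = g • QuotientGroup.mk 1 := by
    rw [MulAction.Quotient.smul_mk, smul_eq_mul, mul_one]
  rw [rot_mk, mk_eq_smul, MulAction.stabilizer_smul_eq_stabilizer_map_conj,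
    MulAction.stabilizer_quotient, MonoidHom.map_zpowers]
  rfl

end Rotation

theorem rotation_transfer_general {y : G} (hy : IsOfFinOrder y) (v v' : Vertex y) (j : ℤ)
    (hfix : rot y v ^ j • v' = v') :
    ∃ k : ℤ, rot y v ^ j = rot y v' ^ (k * j) ∧
      IsUnit (k : ZMod (orderOf y / Int.gcd j (orderOf y))) ∧
      ∀ k' : ℤ, rot y v ^ j = rot y v' ^ (k' * j) →
        (k' : ZMod (orderOf y / Int.gcd j (orderOf y))) = k := by
  have isOfFinOrder_rot (w : Vertex y) : IsOfFinOrder (rot y w) := by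
    rwa [← orderOf_pos_iff, orderOf_rot, orderOf_pos_iff]
  have orderOf_rot_zpow (w : Vertex y) :
      orderOf (rot y w ^ j) = orderOf y / Int.gcd j (orderOf y) := by
    rw [orderOf_zpow_of_isOfFinOrder (isOfFinOrder_rot w), orderOf_rot]
  have rot_zpow_mem : rot y v ^ j ∈ Subgroup.zpowers (rot y v') :=
    stabilizer_eq_zpowers_rot v' ▸ hfix
  have zpowers_eq : Subgroup.zpowers (rot y v ^ j) = Subgroup.zpowers (rot y v' ^ j) :=
    zpowers_eq_of_orderOf_eq (isOfFinOrder_rot v') rot_zpow_mem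
      (Subgroup.zpow_mem_zpowers _ j) ((orderOf_rot_zpow v).trans (orderOf_rot_zpow v').symm)
  rw [← orderOf_rot_zpow v']
  simpa only [zpow_mul'] using exists_isUnit_zpow_eq_of_zpowers_eq zpowers_eq

/-- If `S_v^j` fixes `v'`, then `S_v^j = S_{v'}^(k·j)` for some `k` that is
well-defined and invertible modulo `q / gcd(j, q)`. -/
theorem rotation_transfer
    (G : Type*) [Group G] [Finite G] (x y : G)
    (hgen : Subgroup.closure {x, y} = ⊤) (hxy : (x * y) ^ 2 = 1)
    (v v' : Vertex y) (j : ℤ) (hfix : rot y v ^ j • v' = v') :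
    ∃ k : ℤ, rot y v ^ j = rot y v' ^ (k * j) ∧
      IsUnit (k : ZMod (orderOf y / Int.gcd j (orderOf y))) ∧
      ∀ k' : ℤ, rot y v ^ j = rot y v' ^ (k' * j) →
        (k' : ZMod (orderOf y / Int.gcd j (orderOf y))) = (k : ZMod (orderOf y / Int.gcd j (orderOf y))) := by
  exact rotation_transfer_general (isOfFinOrder_of_finite y) v v' j hfix

end RegularMap
end

section
/- Let (G,x,y) encode a reflexive regular map that is simple, satisfies 2q² > |G| (density exceeding 1/2), and has p = 3. Let v' be a diagonal neighbour of a vertex v. Then the primitive period J is the least element j of {1,…,q} such that S_v^j·v' = v'; moreover every vertex fixed by S_v^J belongs to V_v. -/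
namespace RegularMap

variable {G : Type*} [Group G]

/-!
Put `t = x⁻¹ * y * x⁻¹` and `K = ⟨y, t⟩`. As `x * y` is an involution, the diagonal neighbours of
`g⟨y⟩` are the vertices `g * y ^ i * t⟨y⟩`, so the alignment class of `g⟨y⟩` consists of the
`g * k⟨y⟩` with `k ∈ K`. The power `S_v ^ j` fixes a diagonal neighbour of `v` iff `t` conjugates
`y ^ j` into `⟨y⟩`. Since a finite cyclic group has at most one subgroup of each order, this already
forces `t`, hence all of `K`, to normalize `⟨y ^ j⟩`, and so `S_v ^ j` fixes the whole class `V_v`.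

As `x ^ 3 = 1`, the cosets `K`, `xK`, `x⁻¹K` exhaust `G`, so every subgroup properly containing `K`
is `G`. If `S_v ^ J` is nontrivial and fixes a vertex outside `V_v`, then the normalizer of
`⟨y ^ J⟩` properly contains `K`, hence contains `x`, which is impossible in a simple map. If
`S_v ^ J` is trivial, then `⟨y⟩` meets its conjugate by `t` trivially, so `|K| ≥ q²`, and density
above `1/2` leaves only `K = G`.
-/

lemma mem_zpowers_of_pow_orderOf_eq_one {C : Type*} [Group C] [Finite C] [IsCyclic C] {a b : C}
    (h : a ^ orderOf b = 1) : a ∈ Subgroup.zpowers b := by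
  classical
  have := Fintype.ofFinite C
  let roots : Set C := {c | c ^ orderOf b = 1}
  have hsub : (Subgroup.zpowers b : Set C) ⊆ roots := by
    rintro _ ⟨i, rfl⟩
    change (b ^ i) ^ orderOf b = 1
    rw [← zpow_natCast, zpow_comm, zpow_natCast, pow_orderOf_eq_one, one_zpow]
  have hcard : roots.ncard ≤ (Subgroup.zpowers b : Set C).ncard := by
    rw [← Nat.card_coe_set_eq (Subgroup.zpowers b : Set C), SetLike.coe_sort_coe,
      Nat.card_zpowers]
    simpa [roots, ← Set.ncard_coe_finset] using
      IsCyclic.card_pow_eq_one_le (α := C) (orderOf_pos b)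
  have hroots : (Subgroup.zpowers b : Set C) = roots :=
    Set.eq_of_subset_of_ncard_le hsub hcard
  exact hroots.ge h

lemma mem_normalizer_zpowers_of_conj_mem {y a k : G} (hy : IsOfFinOrder y)
    (ha : a ∈ Subgroup.zpowers y) (h : k⁻¹ * a * k ∈ Subgroup.zpowers y) :
    k ∈ Subgroup.normalizer (Subgroup.zpowers a : Set G) := by
  have : Finite (Subgroup.zpowers y) := hy.finite_zpowers
  have : Finite (Subgroup.zpowers a : Set G) :=
    Set.Finite.subset hy.finite_zpowers (Subgroup.zpowers_le.mpr ha)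
  have hpow : (k⁻¹ * a * k) ^ orderOf a = 1 := by
    simpa [pow_orderOf_eq_one] using conj_pow (i := orderOf a) (a := k⁻¹) (b := a)
  have hmem : k⁻¹ * a * k ∈ Subgroup.zpowers a := by
    obtain ⟨i, hi⟩ := mem_zpowers_of_pow_orderOf_eq_one
      (a := (⟨_, h⟩ : Subgroup.zpowers y)) (b := ⟨a, ha⟩)
      (Subtype.ext <| by simpa using hpow)
    exact ⟨i, congrArg Subtype.val hi⟩
  rw [← inv_inv k]
  refine inv_mem (Subgroup.mem_normalizer_fintype ?_)
  rintro _ ⟨i, rfl⟩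
  have hconj := conj_zpow (i := i) (a := k⁻¹) (b := a)
  rw [inv_inv] at hconj ⊢
  exact hconj ▸ zpow_mem hmem i

lemma card_mul_card_le_of_disjoint_s6 {H₁ H₂ K : Subgroup G} [Finite K] (h₁ : H₁ ≤ K) (h₂ : H₂ ≤ K)
    (h : Disjoint H₁ H₂) : Nat.card H₁ * Nat.card H₂ ≤ Nat.card K := by
  rw [← Nat.card_prod]
  refine Nat.card_le_card_of_injective
    (fun a : H₁ × H₂ ↦ (⟨a.1 * a.2, mul_mem (h₁ a.1.2) (h₂ a.2.2)⟩ : K)) fun a b hab ↦ ?_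
  exact Subgroup.mul_injective_of_disjoint h (congrArg Subtype.val hab)

lemma eq_top_of_card_lt_two_mul_card [Finite G] {K : Subgroup G}
    (h : Nat.card G < 2 * Nat.card K) : K = ⊤ := by
  by_contra hK
  have hindex : 2 ≤ K.index := Subgroup.one_lt_index_of_ne_top hK
  have := Nat.mul_le_mul_right (Nat.card K) hindex
  rw [K.index_mul_card] at this
  exact h.not_ge this

variable {x y : G}

lemma rot_pow_smul_mk_eq_iff (g h : G) (j : ℕ) :
    rot y (QuotientGroup.mk g) ^ j • (QuotientGroup.mk h : Vertex y) = QuotientGroup.mk h ↔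
      (g⁻¹ * h)⁻¹ * y ^ j * (g⁻¹ * h) ∈ Subgroup.zpowers y := by
  change (g * y * g⁻¹) ^ j • (QuotientGroup.mk h : Vertex y) = _ ↔ _
  rw [conj_pow, MulAction.Quotient.smul_mk, smul_eq_mul, eq_comm, QuotientGroup.eq]
  group

/-- For `x ^ 3 = 1` and `(x * y) ^ 2 = 1`, an involution that swaps the base vertex `⟨y⟩` of a
simple map with one of its diagonal neighbours; the elements `g * y ^ i * diagFlip x y` carry `⟨y⟩`
to the diagonal neighbours of `g⟨y⟩`. -/
def diagFlip (x y : G) : G := x⁻¹ * y * x⁻¹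

/-- The setwise stabilizer of the alignment class of the base vertex `⟨y⟩` of a simple map, encoded
by its generators; the class of `g⟨y⟩` is the set of vertices `g * k⟨y⟩` with `k` in it. -/
def diagSubgroup (x y : G) : Subgroup G := Subgroup.closure {y, diagFlip x y}

lemma right_mem_diagSubgroup (x y : G) : y ∈ diagSubgroup x y := Subgroup.subset_closure (by simp)

lemma diagFlip_mem_diagSubgroup (x y : G) : diagFlip x y ∈ diagSubgroup x y :=
  Subgroup.subset_closure (by simp)

lemma zpowers_le_diagSubgroup (x y : G) : Subgroup.zpowers y ≤ diagSubgroup x y :=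
  Subgroup.zpowers_le.mpr (right_mem_diagSubgroup x y)

lemma mul_eq_inv_mul_inv_of_sq_eq_one (hxy : (x * y) ^ 2 = 1) : x * y = y⁻¹ * x⁻¹ := by
  rw [← mul_inv_rev, eq_inv_iff_mul_eq_one, ← sq, hxy]

lemma mk_mul_zpow (a : G) (i : ℤ) :
    (QuotientGroup.mk (a * y ^ i) : Vertex y) = QuotientGroup.mk a :=
  QuotientGroup.mk_mul_of_mem a (Subgroup.zpow_mem_zpowers y i)

lemma mk_mul_self (a : G) : (QuotientGroup.mk (a * y) : Vertex y) = QuotientGroup.mk a :=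
  QuotientGroup.mk_mul_of_mem a (Subgroup.mem_zpowers y)

lemma Adj.exists_eq_mk (hxy : (x * y) ^ 2 = 1) {g : G} {w : Vertex y}
    (h : Adj x y (QuotientGroup.mk g) w) :
    ∃ i : ℤ, w = QuotientGroup.mk (g * y ^ i * x) := by
  obtain ⟨-, a, ha⟩ := h
  rcases Set.pair_eq_pair_iff.mp ha with ⟨hg, hw⟩ | ⟨hg, hw⟩
  · obtain ⟨i, hi : y ^ i = g⁻¹ * a⟩ := QuotientGroup.eq.mp hg
    exact ⟨i, by rw [hw, mk_mul_self, hi, mul_inv_cancel_left]⟩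
  · obtain ⟨i, hi : y ^ i = g⁻¹ * (a * x * y)⟩ := QuotientGroup.eq.mp hg
    refine ⟨i, ?_⟩
    rw [hw, hi, mul_inv_cancel_left, ← mk_mul_self (a * x * y * x)]
    congr 1
    simpa only [sq, mul_assoc, mul_one] using (congrArg (a * ·) hxy).symm

lemma rot_sq_smul_mk (hxy : (x * y) ^ 2 = 1) (g : G) (i : ℤ) :
    rot y (QuotientGroup.mk (g * y ^ i * x)) ^ 2 • (QuotientGroup.mk g : Vertex y) =
      QuotientGroup.mk (g * y ^ (i - 1) * diagFlip x y) := by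
  change (g * y ^ i * x * y * (g * y ^ i * x)⁻¹) ^ 2 • (QuotientGroup.mk g : Vertex y) = _
  rw [conj_pow, MulAction.Quotient.smul_mk, smul_eq_mul,
    ← mk_mul_zpow (g * y ^ (i - 1) * diagFlip x y) (-i)]
  congr 1
  calc g * y ^ i * x * y ^ 2 * (g * y ^ i * x)⁻¹ * g
      = g * y ^ i * (x * y) * y * x⁻¹ * y ^ (-i) := by
        rw [sq]
        group
    _ = g * y ^ (i - 1) * diagFlip x y * y ^ (-i) := by
        rw [mul_eq_inv_mul_inv_of_sq_eq_one hxy, diagFlip]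
        group

lemma DiagNeighbor.exists_eq_mk (hxy : (x * y) ^ 2 = 1) {g : G} {v' : Vertex y}
    (h : DiagNeighbor x y (QuotientGroup.mk g) v') :
    ∃ i : ℤ, v' = QuotientGroup.mk (g * y ^ i * diagFlip x y) := by
  obtain ⟨w, hw, rfl⟩ := h
  obtain ⟨i, rfl⟩ := hw.exists_eq_mk hxy
  exact ⟨i - 1, rot_sq_smul_mk hxy g i⟩

lemma IsSimple.diagNeighbor_mk_mul_diagFlip (hs : IsSimple x y) (hxy : (x * y) ^ 2 = 1) (g : G) :
    DiagNeighbor x y (QuotientGroup.mk g) (QuotientGroup.mk (g * diagFlip x y)) := by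
  refine ⟨QuotientGroup.mk (g * y * x * y), ⟨?_, g * y, ?_⟩, ?_⟩
  · rw [← mk_mul_self g]
    exact hs.1 (g * y)
  · rw [mk_mul_self g]
  · simpa [mk_mul_self] using (rot_sq_smul_mk hxy g 1).symm

lemma Aligned.inv_mul_mem_diagSubgroup (hxy : (x * y) ^ 2 = 1) {g h : G}
    (hal : Aligned x y (QuotientGroup.mk g) (QuotientGroup.mk h)) :
    g⁻¹ * h ∈ diagSubgroup x y := by
  generalize hw : (QuotientGroup.mk h : Vertex y) = w at hal
  induction hal generalizing h with
  | refl => exact zpowers_le_diagSubgroup x y (QuotientGroup.eq.mp hw.symm)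
  | @tail u _ _ hstep ih =>
    obtain ⟨a, rfl⟩ := QuotientGroup.mk_surjective u
    obtain ⟨i, rfl⟩ := hstep.exists_eq_mk hxy
    have hgt : g⁻¹ * (a * y ^ i * diagFlip x y) ∈ diagSubgroup x y := by
      simpa only [mul_assoc] using mul_mem (mul_mem (ih rfl)
        (zpow_mem (right_mem_diagSubgroup x y) i)) (diagFlip_mem_diagSubgroup x y)
    have hth := zpowers_le_diagSubgroup x y (QuotientGroup.eq.mp hw.symm)
    simpa only [mul_assoc, mul_inv_cancel_left] using mul_mem hgt hth

lemma IsSimple.aligned_of_inv_mul_mem_diagSubgroup [Finite G] (hs : IsSimple x y)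
    (hxy : (x * y) ^ 2 = 1) {g h : G} (hgh : g⁻¹ * h ∈ diagSubgroup x y) :
    Aligned x y (QuotientGroup.mk g) (QuotientGroup.mk h) := by
  suffices ∀ k ∈ Submonoid.closure {y, diagFlip x y},
      Aligned x y (QuotientGroup.mk g) (QuotientGroup.mk (g * k)) by
    rw [← mul_inv_cancel_left g h]
    exact this _ (Subgroup.closure_toSubmonoid_of_finite (G := G) ▸ hgh)
  intro k hk
  induction hk using Submonoid.closure_induction_right with
  | one => rw [mul_one]; exact Relation.ReflTransGen.refl
  | mul_right a _ b hb ih =>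
    rw [← mul_assoc]
    rcases hb with rfl | rfl
    · rwa [mk_mul_self]
    · exact ih.tail (hs.diagNeighbor_mk_mul_diagFlip hxy (g * a))

lemma DiagNeighbor.rot_pow_smul_eq_iff (hxy : (x * y) ^ 2 = 1) {v v' : Vertex y}
    (h : DiagNeighbor x y v v') (j : ℕ) :
    rot y v ^ j • v' = v' ↔ (diagFlip x y)⁻¹ * y ^ j * diagFlip x y ∈ Subgroup.zpowers y := by
  obtain ⟨g, rfl⟩ := QuotientGroup.mk_surjective v
  obtain ⟨i, rfl⟩ := h.exists_eq_mk hxy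
  have hconj : (g⁻¹ * (g * y ^ i * diagFlip x y))⁻¹ * y ^ j * (g⁻¹ * (g * y ^ i * diagFlip x y)) =
      (diagFlip x y)⁻¹ * y ^ j * diagFlip x y := by group
  rw [rot_pow_smul_mk_eq_iff, hconj]

lemma diagSubgroup_le_normalizer_zpowers (hy : IsOfFinOrder y) {a : G}
    (ha : a ∈ Subgroup.zpowers y)
    (h : (diagFlip x y)⁻¹ * a * diagFlip x y ∈ Subgroup.zpowers y) :
    diagSubgroup x y ≤ Subgroup.normalizer (Subgroup.zpowers a : Set G) := by
  refine (Subgroup.closure_le _).mpr ?_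
  rintro k (rfl | rfl)
  · have hk := Subgroup.mem_zpowers k
    exact mem_normalizer_zpowers_of_conj_mem hy ha (mul_mem (mul_mem (inv_mem hk) ha) hk)
  · exact mem_normalizer_zpowers_of_conj_mem hy ha h

lemma Aligned.rot_pow_smul_eq (hxy : (x * y) ^ 2 = 1) (hy : IsOfFinOrder y) {u u' : Vertex y}
    (hal : Aligned x y u u') {j : ℕ}
    (h : (diagFlip x y)⁻¹ * y ^ j * diagFlip x y ∈ Subgroup.zpowers y) :
    rot y u ^ j • u' = u' := by
  obtain ⟨a, rfl⟩ := QuotientGroup.mk_surjective u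
  obtain ⟨b, rfl⟩ := QuotientGroup.mk_surjective u'
  have hj : y ^ j ∈ Subgroup.zpowers y := Subgroup.npow_mem_zpowers y j
  have hnorm := diagSubgroup_le_normalizer_zpowers hy hj h (hal.inv_mul_mem_diagSubgroup hxy)
  rw [rot_pow_smul_mk_eq_iff]
  exact Subgroup.zpowers_le.mpr hj
    ((Subgroup.mem_normalizer_iff''.mp hnorm _).mp (Subgroup.mem_zpowers _))

theorem DiagNeighbor.isLeast_primPeriod (hxy : (x * y) ^ 2 = 1) (hy : IsOfFinOrder y)
    {v v' : Vertex y} (hdiag : DiagNeighbor x y v v') :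
    IsLeast {j : ℕ | 1 ≤ j ∧ j ≤ orderOf y ∧ rot y v ^ j • v' = v'} (primPeriod x y) := by
  have hall (j : ℕ) : (∀ u u' : Vertex y, Aligned x y u u' → rot y u ^ j • u' = u') ↔
      rot y v ^ j • v' = v' :=
    ⟨fun h ↦ h v v' (Relation.ReflTransGen.single hdiag), fun h _ _ hal ↦
      hal.rot_pow_smul_eq hxy hy ((hdiag.rot_pow_smul_eq_iff hxy j).mp h)⟩
  have hJ : primPeriod x y = sInf {j : ℕ | 1 ≤ j ∧ rot y v ^ j • v' = v'} := by
    simp only [primPeriod, hall]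
  have hq : orderOf y ∈ {j : ℕ | 1 ≤ j ∧ rot y v ^ j • v' = v'} :=
    ⟨hy.orderOf_pos, (hdiag.rot_pow_smul_eq_iff hxy _).mpr (by simp [pow_orderOf_eq_one])⟩
  rw [hJ]
  obtain ⟨hpos, hfix⟩ := Nat.sInf_mem ⟨_, hq⟩
  exact ⟨⟨hpos, Nat.sInf_le hq, hfix⟩, fun j hj ↦ Nat.sInf_le ⟨hj.1, hj.2.2⟩⟩

open scoped Pointwise in
lemma cosets_diagSubgroup_eq_univ (hgen : Subgroup.closure {x, y} = ⊤) (hx : x ^ 3 = 1)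
    (hxy : (x * y) ^ 2 = 1) :
    ({↑(1 : G), ↑x, ↑x⁻¹} : Set (G ⧸ diagSubgroup x y)) = Set.univ := by
  set cosets : Set (G ⧸ diagSubgroup x y) := {↑(1 : G), ↑x, ↑x⁻¹} with hcosets
  have hxx : x * x = x⁻¹ := by rw [eq_inv_iff_mul_eq_one, ← sq, ← pow_succ, hx]
  have hyx : y * x = x⁻¹ * y⁻¹ := by
    rw [eq_inv_mul_iff_mul_eq, ← mul_assoc, mul_eq_inv_mul_inv_of_sq_eq_one hxy,
      inv_mul_cancel_right]
  have hyx_inv : y * x⁻¹ = x * diagFlip x y := by simp [diagFlip, mul_assoc]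
  have hy_one : (y : G ⧸ diagSubgroup x y) = ↑(1 : G) := by
    simpa using QuotientGroup.mk_mul_of_mem 1 (right_mem_diagSubgroup x y)
  have hy_x : (↑(y * x) : G ⧸ diagSubgroup x y) = ↑x⁻¹ :=
    hyx ▸ QuotientGroup.mk_mul_of_mem x⁻¹ (inv_mem (right_mem_diagSubgroup x y))
  have hy_x_inv : (↑(y * x⁻¹) : G ⧸ diagSubgroup x y) = ↑x :=
    hyx_inv ▸ QuotientGroup.mk_mul_of_mem x (diagFlip_mem_diagSubgroup x y)
  have hstab : MulAction.stabilizer G cosets = ⊤ := by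
    rw [eq_top_iff, ← hgen, Subgroup.closure_le]
    rintro a (rfl | rfl) <;>
      rw [SetLike.mem_coe, MulAction.mem_stabilizer_set' (by simp [hcosets])]
    · rintro _ (rfl | rfl | rfl) <;> simp [hcosets, hxx]
    · rintro _ (rfl | rfl | rfl) <;> simp [hcosets, hy_one, hy_x, hy_x_inv]
  refine Set.eq_univ_of_forall fun u ↦ ?_
  obtain ⟨g, rfl⟩ := QuotientGroup.mk_surjective u
  have hg : g ∈ MulAction.stabilizer G cosets := hstab ▸ Subgroup.mem_top g
  simpa using (MulAction.mem_stabilizer_set.mp hg ((1 : G) : G ⧸ diagSubgroup x y)).mpr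
    (Set.mem_insert _ _)

lemma eq_top_of_diagSubgroup_lt (hgen : Subgroup.closure {x, y} = ⊤) (hx : x ^ 3 = 1)
    (hxy : (x * y) ^ 2 = 1) {N : Subgroup G} (hN : diagSubgroup x y < N) : N = ⊤ := by
  obtain ⟨hle, k, hk, hkK⟩ := SetLike.lt_iff_le_and_exists.mp hN
  have hmem_of_eq {a : G} (ha : (k : G ⧸ diagSubgroup x y) = a) : a ∈ N := by
    rw [← mul_inv_cancel_left k a]
    exact mul_mem hk (hle (QuotientGroup.eq.mp ha))
  have hxN : x ∈ N := by
    have hmem : (k : G ⧸ diagSubgroup x y) ∈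
        ({↑(1 : G), ↑x, ↑x⁻¹} : Set (G ⧸ diagSubgroup x y)) :=
      cosets_diagSubgroup_eq_univ hgen hx hxy ▸ Set.mem_univ _
    rcases hmem with h | h | h
    · exact absurd (by simpa using QuotientGroup.eq.mp h) hkK
    · exact hmem_of_eq h
    · exact inv_mem_iff.mp (hmem_of_eq h)
  rw [eq_top_iff, ← hgen, Subgroup.closure_le]
  rintro a (rfl | rfl)
  · exact hxN
  · exact hle (right_mem_diagSubgroup x a)

/- The edges `⟨x * y⟩` and `a⟨x * y⟩` have the same endpoints, so `a` is a power of `x * y`, an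
involution outside `⟨y⟩`. -/
lemma IsSimple.eq_one_of_conj_mem (hs : IsSimple x y) (hxy : (x * y) ^ 2 = 1) {a : G}
    (ha : a ∈ Subgroup.zpowers y) (hconj : x⁻¹ * a * x ∈ Subgroup.zpowers y) : a = 1 := by
  have hbase : (QuotientGroup.mk a : Vertex y) = QuotientGroup.mk 1 :=
    (QuotientGroup.eq.mpr (by simpa using ha)).symm
  have hend : (QuotientGroup.mk (a * x * y) : Vertex y) = QuotientGroup.mk (1 * x * y) := by
    rw [mk_mul_self, mk_mul_self, eq_comm, QuotientGroup.eq]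
    simpa [mul_assoc] using hconj
  have hedge := hs.2 a 1 (by rw [hbase, hend])
  obtain ⟨i, hi : (x * y) ^ i = a⟩ : a ∈ Subgroup.zpowers (x * y) := by
    simpa using QuotientGroup.eq.mp hedge.symm
  have hsq : (x * y) ^ (2 : ℤ) = 1 := mod_cast hxy
  rcases Int.even_or_odd' i with ⟨c, rfl | rfl⟩
  · rw [← hi, zpow_mul, hsq, one_zpow]
  · rw [zpow_add, zpow_mul, hsq, one_zpow, one_mul, zpow_one] at hi
    exact absurd hbase.symm (by simpa [hi] using hs.1 1)

theorem IsSimple.aligned_of_rot_pow_smul_eq [Finite G] (hs : IsSimple x y)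
    (hgen : Subgroup.closure {x, y} = ⊤) (hx : x ^ 3 = 1) (hxy : (x * y) ^ 2 = 1) {j : ℕ}
    (hj : y ^ j ≠ 1) (hflip : (diagFlip x y)⁻¹ * y ^ j * diagFlip x y ∈ Subgroup.zpowers y)
    {v w : Vertex y} (hw : rot y v ^ j • w = w) : Aligned x y v w := by
  obtain ⟨g, rfl⟩ := QuotientGroup.mk_surjective v
  obtain ⟨h, rfl⟩ := QuotientGroup.mk_surjective w
  have hy := isOfFinOrder_of_finite y
  have hjy : y ^ j ∈ Subgroup.zpowers y := Subgroup.npow_mem_zpowers y j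
  have hle := diagSubgroup_le_normalizer_zpowers hy hjy hflip
  have hgh := mem_normalizer_zpowers_of_conj_mem hy hjy ((rot_pow_smul_mk_eq_iff g h j).mp hw)
  refine hs.aligned_of_inv_mul_mem_diagSubgroup hxy (by_contra fun hgh' ↦ hj ?_)
  have htop := eq_top_of_diagSubgroup_lt hgen hx hxy
    (SetLike.lt_iff_le_and_exists.mpr ⟨hle, _, hgh, hgh'⟩)
  have hxN : x ∈ Subgroup.normalizer (Subgroup.zpowers (y ^ j) : Set G) :=
    htop ▸ Subgroup.mem_top x
  exact hs.eq_one_of_conj_mem hxy hjy (Subgroup.zpowers_le.mpr hjy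
    ((Subgroup.mem_normalizer_iff''.mp hxN _).mp (Subgroup.mem_zpowers _)))

lemma orderOf_sq_le_card_diagSubgroup [Finite G]
    (h : ∀ a ∈ Subgroup.zpowers y,
      (diagFlip x y)⁻¹ * a * diagFlip x y ∈ Subgroup.zpowers y → a = 1) :
    orderOf y ^ 2 ≤ Nat.card (diagSubgroup x y) := by
  set t := diagFlip x y
  have ht : t ∈ diagSubgroup x y := diagFlip_mem_diagSubgroup x y
  have hconj : t * y * t⁻¹ ∈ diagSubgroup x y :=
    mul_mem (mul_mem ht (right_mem_diagSubgroup x y)) (inv_mem ht)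
  have horder : orderOf (t * y * t⁻¹) = orderOf y :=
    (SemiconjBy.orderOf_eq t (by simp [SemiconjBy])).symm
  have hdisj : Disjoint (Subgroup.zpowers y) (Subgroup.zpowers (t * y * t⁻¹)) := by
    rw [Subgroup.disjoint_def]
    rintro a ha ⟨i, rfl⟩
    refine h _ ha ⟨i, ?_⟩
    simp only [conj_zpow]
    group
  calc orderOf y ^ 2
      = Nat.card (Subgroup.zpowers y) * Nat.card (Subgroup.zpowers (t * y * t⁻¹)) := by
        rw [Nat.card_zpowers, Nat.card_zpowers, horder, sq]
    _ ≤ Nat.card (diagSubgroup x y) := card_mul_card_le_of_disjoint_s6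
        (zpowers_le_diagSubgroup x y) (Subgroup.zpowers_le.mpr hconj) hdisj

lemma DiagNeighbor.eq_one_of_conj_diagFlip_mem (hxy : (x * y) ^ 2 = 1) (hy : IsOfFinOrder y)
    {v v' : Vertex y} (hdiag : DiagNeighbor x y v v') (hJ : y ^ primPeriod x y = 1) {a : G}
    (ha : a ∈ Subgroup.zpowers y)
    (h : (diagFlip x y)⁻¹ * a * diagFlip x y ∈ Subgroup.zpowers y) : a = 1 := by
  classical
  obtain ⟨⟨hpos, -, -⟩, hleast⟩ := hdiag.isLeast_primPeriod hxy hy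
  obtain ⟨n, hn, rfl⟩ := Finset.mem_image.mp (hy.mem_zpowers_iff_mem_range_orderOf.mp ha)
  have hnq : n < orderOf y := Finset.mem_range.mp hn
  have hqJ : orderOf y ≤ primPeriod x y := orderOf_le_of_pow_eq_one hpos hJ
  suffices n = 0 by rw [this, pow_zero]
  by_contra hn0
  have hJn : primPeriod x y ≤ n := hleast
    ⟨Nat.one_le_iff_ne_zero.mpr hn0, hnq.le, (hdiag.rot_pow_smul_eq_iff hxy n).mpr h⟩
  exact (hJn.trans_lt hnq).not_ge hqJ

theorem primPeriod_least_and_fixed_points_general [Finite G]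
    (hgen : Subgroup.closure {x, y} = ⊤) (hx : x ^ 3 = 1) (hxy : (x * y) ^ 2 = 1)
    (hsimple : IsSimple x y) {v v' : Vertex y} (hdiag : DiagNeighbor x y v v') :
    IsLeast {j : ℕ | 1 ≤ j ∧ j ≤ orderOf y ∧ rot y v ^ j • v' = v'} (primPeriod x y) ∧
    (Nat.card G < 2 * orderOf y ^ 2 →
      ∀ w : Vertex y, rot y v ^ primPeriod x y • w = w → Aligned x y v w) := by
  have hy := isOfFinOrder_of_finite y
  have hleast := hdiag.isLeast_primPeriod hxy hy
  refine ⟨hleast, fun hden w hw ↦ ?_⟩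
  by_cases hJ : y ^ primPeriod x y = 1
  · have hcard := orderOf_sq_le_card_diagSubgroup fun a ↦
      hdiag.eq_one_of_conj_diagFlip_mem hxy hy hJ (a := a)
    have htop := eq_top_of_card_lt_two_mul_card (hden.trans_le (Nat.mul_le_mul_left 2 hcard))
    obtain ⟨g, rfl⟩ := QuotientGroup.mk_surjective v
    obtain ⟨h, rfl⟩ := QuotientGroup.mk_surjective w
    exact hsimple.aligned_of_inv_mul_mem_diagSubgroup hxy (htop ▸ Subgroup.mem_top _)
  · exact hsimple.aligned_of_rot_pow_smul_eq hgen hx hxy hJ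
      ((hdiag.rot_pow_smul_eq_iff hxy _).mp hleast.1.2.2) hw

/-- For a diagonal neighbour `v'` of `v`, the primitive period `J` is the least
`j ∈ {1,…,q}` with `S_v^j • v' = v'`; and every vertex fixed by `S_v^J` lies in `V_v`. -/
theorem primPeriod_least_and_fixed_points
    (G : Type*) [Group G] [Finite G] (x y : G)
    (hgen : Subgroup.closure {x, y} = ⊤) (hxy : (x * y) ^ 2 = 1)
    (hrefl : IsReflexive x y) (hsimple : IsSimple x y)
    (hden : 2 * orderOf y ^ 2 > Nat.card G) (hp : orderOf x = 3)
    (v v' : Vertex y) (hdiag : DiagNeighbor x y v v') :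
    IsLeast {j : ℕ | 1 ≤ j ∧ j ≤ orderOf y ∧ rot y v ^ j • v' = v'} (primPeriod x y) ∧
    ∀ w : Vertex y, rot y v ^ primPeriod x y • w = w → Aligned x y v w := by
  obtain ⟨hleast, haligned⟩ := primPeriod_least_and_fixed_points_general hgen
    (hp ▸ pow_orderOf_eq_one x) hxy hsimple hdiag
  exact ⟨hleast, haligned hden⟩

end RegularMap
end
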